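/- arXiv:2107.10305 — 2 statements merged into one kernel-verified Lean document; each statement's English description precedes it below -/
import Mathlib

section
/- Let p be a prime and L an algebraic closure of 𝔽_p. (1) There exists a vector v ∈ V₆ all of whose coefficients lie in the prime subfield 𝔽_p that is stable for the action of G₆; in particular, for v = aXT² + dXU² + hYW² + (jX+kY)TU + rZUW one has Δ₆(v) = 16a⁹d³h⁶k⁶r¹² − 8a⁸d²h⁶j²k⁶r¹² + a⁷dh⁶j⁴k⁶r¹². (2) For any nonzero b, j, e, g, r ∈ Lˣ, the dual cyclic vector v = bYT² + jXTU + eYU² + gXW² + rZUW satisfies Δ₆(v) = 16 b⁹ e³ g⁶ j⁶ r¹², and is stable if and only if p ≠ 2. -/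
/- The discriminant of the binary quartic A X⁴ + B X³Y + C X²Y² + D XY³ + E Y⁴. -/
def disc4 {R : Type*} [CommRing R] (A B C D E : R) : R :=
  B ^ 2 * C ^ 2 * D ^ 2 - 4 * B ^ 2 * C ^ 3 * E - 4 * B ^ 3 * D ^ 3 + 18 * B ^ 3 * C * D * E
       - 27 * B ^ 4 * E ^ 2 - 4 * A * C ^ 3 * D ^ 2 + 16 * A * C ^ 4 * E + 18 * A * B * C * D ^ 3
       - 80 * A * B * C ^ 2 * D * E - 6 * A * B ^ 2 * D ^ 2 * E + 144 * A * B ^ 2 * C * E ^ 2 - 27 * A ^ 2 * D ^ 4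
       + 144 * A ^ 2 * C * D ^ 2 * E - 128 * A ^ 2 * C ^ 2 * E ^ 2 - 192 * A ^ 2 * B * D * E ^ 2 + 256 * A ^ 3 * E ^ 3

/- The polynomials β₁, …, β₆ of the paper, as integer polynomials in the ten
coordinates a, b, d, e, g, h, j, k, o, r of V₆ (indices 0,…,9 in that order). -/
noncomputable def beta1 : MvPolynomial (Fin 10) ℤ :=
  4 * MvPolynomial.X 0 * MvPolynomial.X 2 * MvPolynomial.X 4 - MvPolynomial.X 4 * MvPolynomial.X 6 ^ 2
noncomputable def beta2 : MvPolynomial (Fin 10) ℤ :=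
  4 * MvPolynomial.X 1 * MvPolynomial.X 2 * MvPolynomial.X 4 + 4 * MvPolynomial.X 0 * MvPolynomial.X 3 * MvPolynomial.X 4 + 4 * MvPolynomial.X 0 * MvPolynomial.X 2 * MvPolynomial.X 5 - MvPolynomial.X 5 * MvPolynomial.X 6 ^ 2
    - 2 * MvPolynomial.X 4 * MvPolynomial.X 6 * MvPolynomial.X 7
noncomputable def beta3 : MvPolynomial (Fin 10) ℤ :=
  4 * MvPolynomial.X 1 * MvPolynomial.X 3 * MvPolynomial.X 4 + 4 * MvPolynomial.X 1 * MvPolynomial.X 2 * MvPolynomial.X 5 + 4 * MvPolynomial.X 0 * MvPolynomial.X 3 * MvPolynomial.X 5 - 2 * MvPolynomial.X 5 * MvPolynomial.X 6 * MvPolynomial.X 7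
    - MvPolynomial.X 4 * MvPolynomial.X 7 ^ 2
noncomputable def beta4 : MvPolynomial (Fin 10) ℤ :=
  4 * MvPolynomial.X 1 * MvPolynomial.X 3 * MvPolynomial.X 5 - MvPolynomial.X 5 * MvPolynomial.X 7 ^ 2
noncomputable def beta5 : MvPolynomial (Fin 10) ℤ :=
  -MvPolynomial.X 0 * MvPolynomial.X 9 ^ 2 - MvPolynomial.X 2 * MvPolynomial.X 8 ^ 2 + MvPolynomial.X 8 * MvPolynomial.X 6 * MvPolynomial.X 9
noncomputable def beta6 : MvPolynomial (Fin 10) ℤ :=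
  -MvPolynomial.X 1 * MvPolynomial.X 9 ^ 2 - MvPolynomial.X 3 * MvPolynomial.X 8 ^ 2 + MvPolynomial.X 8 * MvPolynomial.X 7 * MvPolynomial.X 9

/- Δ₆ = (1/16)·disc₄(F₁F₂): the integer polynomial Q with 16·Q = disc₄(F₁F₂)
(passed as the argument `Q`), interpreted in L via ℤ → L and evaluated at the
coordinates of v ∈ V₆. -/
noncomputable def Delta6 {L : Type*} [CommRing L]
    (Q : MvPolynomial (Fin 10) ℤ) (c : Fin 10 → L) : L :=
  MvPolynomial.aeval c Q

/- Zariski-closedness of a subset of affine n-space over L: it is the common zero locus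
of a set of polynomial functions (with respect to the fixed coordinates). -/
def IsZariskiClosed {n : ℕ} {L : Type*} [CommRing L] (s : Set (Fin n → L)) : Prop :=
  ∃ P : Set (MvPolynomial (Fin n) L), s = {x | ∀ p ∈ P, MvPolynomial.eval x p = 0}

/- Variables of the ambient polynomial ring of V₆: X, Y, Z are inl (inl 0), inl (inl 1),
inl (inr ()) and T, U, W are inr (inl 0), inr (inl 1), inr (inr ()). -/
abbrev Vars6 : Type := (Fin 2 ⊕ Unit) ⊕ (Fin 2 ⊕ Unit)

/- The element of V₆ with coordinates c = (a,b,d,e,g,h,j,k,o,r), recorded as the triple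
of its three components
((aX+bY)T² + (dX+eY)U² + (jX+kY)TU, (gX+hY)W², Z(oT+rU)W),
on which the torus part of G₆ acts by separate scalars. -/
noncomputable def toTriple6 {L : Type*} [CommRing L] (c : Fin 10 → L) :
    MvPolynomial Vars6 L × MvPolynomial Vars6 L × MvPolynomial Vars6 L :=
  ((MvPolynomial.C (c 0) * MvPolynomial.X (Sum.inl (Sum.inl 0)) + MvPolynomial.C (c 1) * MvPolynomial.X (Sum.inl (Sum.inl 1))) * MvPolynomial.X (Sum.inr (Sum.inl 0)) ^ 2
    + (MvPolynomial.C (c 2) * MvPolynomial.X (Sum.inl (Sum.inl 0)) + MvPolynomial.C (c 3) * MvPolynomial.X (Sum.inl (Sum.inl 1))) * MvPolynomial.X (Sum.inr (Sum.inl 1)) ^ 2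
    + (MvPolynomial.C (c 6) * MvPolynomial.X (Sum.inl (Sum.inl 0)) + MvPolynomial.C (c 7) * MvPolynomial.X (Sum.inl (Sum.inl 1))) * (MvPolynomial.X (Sum.inr (Sum.inl 0)) * MvPolynomial.X (Sum.inr (Sum.inl 1))),
   (MvPolynomial.C (c 4) * MvPolynomial.X (Sum.inl (Sum.inl 0)) + MvPolynomial.C (c 5) * MvPolynomial.X (Sum.inl (Sum.inl 1))) * MvPolynomial.X (Sum.inr (Sum.inr ())) ^ 2,
   MvPolynomial.X (Sum.inl (Sum.inr ())) * (MvPolynomial.C (c 8) * MvPolynomial.X (Sum.inr (Sum.inl 0)) + MvPolynomial.C (c 9) * MvPolynomial.X (Sum.inr (Sum.inl 1))) * MvPolynomial.X (Sum.inr (Sum.inr ())))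

/- Linear substitution in (X,Y) by M ∈ SL₂(L) fixing Z, and in (T,U) by N ∈ SL₂(L)
fixing W. -/
noncomputable def sub6 {L : Type*} [CommRing L]
    (M N : Matrix.SpecialLinearGroup (Fin 2) L)
    (v : MvPolynomial Vars6 L) : MvPolynomial Vars6 L :=
  MvPolynomial.aeval
    (Sum.elim
      (Sum.elim (fun i => ∑ j : Fin 2, MvPolynomial.C (M.1 i j) * MvPolynomial.X (Sum.inl (Sum.inl j)))
                (fun _ => MvPolynomial.X (Sum.inl (Sum.inr ()))))
      (Sum.elim (fun i => ∑ j : Fin 2, MvPolynomial.C (N.1 i j) * MvPolynomial.X (Sum.inr (Sum.inl j)))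
                (fun _ => MvPolynomial.X (Sum.inr (Sum.inr ()))))) v

/- The action of G₆ = SL₂(L) × SL₂(L) × Lˣ × Lˣ on V₆ (written on the triple of
components): (M, N, s, t) substitutes (X,Y) by M, (T,U) by N, and multiplies the first
component by s⁻¹, the second by s³t², and the third by t⁻¹. -/
noncomputable def act6 {L : Type*} [Field L]
    (g : Matrix.SpecialLinearGroup (Fin 2) L × Matrix.SpecialLinearGroup (Fin 2) L × Lˣ × Lˣ)
    (v : MvPolynomial Vars6 L × MvPolynomial Vars6 L × MvPolynomial Vars6 L) :
    MvPolynomial Vars6 L × MvPolynomial Vars6 L × MvPolynomial Vars6 L :=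
  (((g.2.2.1 : L))⁻¹ • sub6 g.1 g.2.1 v.1,
   ((g.2.2.1 : L) ^ 3 * (g.2.2.2 : L) ^ 2) • sub6 g.1 g.2.1 v.2.1,
   ((g.2.2.2 : L))⁻¹ • sub6 g.1 g.2.1 v.2.2)

/- Stability: the orbit of v (in the coordinate space of V₆ with respect to its monomial
basis) is Zariski-closed and the stabilizer of v in G₆ is finite. -/
def Stable6 {L : Type*} [Field L] (c : Fin 10 → L) : Prop :=
  IsZariskiClosed {c' : Fin 10 → L |
    ∃ g : Matrix.SpecialLinearGroup (Fin 2) L × Matrix.SpecialLinearGroup (Fin 2) L × Lˣ × Lˣ,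
      toTriple6 c' = act6 g (toTriple6 c)} ∧
  {g : Matrix.SpecialLinearGroup (Fin 2) L × Matrix.SpecialLinearGroup (Fin 2) L × Lˣ × Lˣ |
      act6 g (toTriple6 c) = toTriple6 c}.Finite

/-- The group `G₆`. -/
abbrev Grp6 (L : Type*) [Field L] : Type _ :=
  Matrix.SpecialLinearGroup (Fin 2) L × Matrix.SpecialLinearGroup (Fin 2) L × Lˣ × Lˣ

section Action

variable {L : Type*} [Field L]

/-- The action of `G₆` on the coordinates of `V₆`. -/
def coordAct6 (γ : Grp6 L) (c : Fin 10 → L) : Fin 10 → L :=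
  let M := γ.1.1
  let N := γ.2.1.1
  let s : L := γ.2.2.1
  let t : L := γ.2.2.2
  ![s⁻¹ * ((c 0 * M 0 0 + c 1 * M 1 0) * N 0 0 ^ 2 + (c 6 * M 0 0 + c 7 * M 1 0) * (N 0 0 * N 1 0)
      + (c 2 * M 0 0 + c 3 * M 1 0) * N 1 0 ^ 2),
    s⁻¹ * ((c 0 * M 0 1 + c 1 * M 1 1) * N 0 0 ^ 2 + (c 6 * M 0 1 + c 7 * M 1 1) * (N 0 0 * N 1 0)
      + (c 2 * M 0 1 + c 3 * M 1 1) * N 1 0 ^ 2),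
    s⁻¹ * ((c 0 * M 0 0 + c 1 * M 1 0) * N 0 1 ^ 2 + (c 6 * M 0 0 + c 7 * M 1 0) * (N 0 1 * N 1 1)
      + (c 2 * M 0 0 + c 3 * M 1 0) * N 1 1 ^ 2),
    s⁻¹ * ((c 0 * M 0 1 + c 1 * M 1 1) * N 0 1 ^ 2 + (c 6 * M 0 1 + c 7 * M 1 1) * (N 0 1 * N 1 1)
      + (c 2 * M 0 1 + c 3 * M 1 1) * N 1 1 ^ 2),
    s ^ 3 * t ^ 2 * (c 4 * M 0 0 + c 5 * M 1 0),
    s ^ 3 * t ^ 2 * (c 4 * M 0 1 + c 5 * M 1 1),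
    s⁻¹ * (2 * (c 0 * M 0 0 + c 1 * M 1 0) * (N 0 0 * N 0 1)
      + (c 6 * M 0 0 + c 7 * M 1 0) * (N 0 0 * N 1 1 + N 0 1 * N 1 0)
      + 2 * (c 2 * M 0 0 + c 3 * M 1 0) * (N 1 0 * N 1 1)),
    s⁻¹ * (2 * (c 0 * M 0 1 + c 1 * M 1 1) * (N 0 0 * N 0 1)
      + (c 6 * M 0 1 + c 7 * M 1 1) * (N 0 0 * N 1 1 + N 0 1 * N 1 0)
      + 2 * (c 2 * M 0 1 + c 3 * M 1 1) * (N 1 0 * N 1 1)),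
    t⁻¹ * (c 8 * N 0 0 + c 9 * N 1 0),
    t⁻¹ * (c 8 * N 0 1 + c 9 * N 1 1)]

theorem toTriple6_coordAct6 (γ : Grp6 L) (c : Fin 10 → L) :
    toTriple6 (coordAct6 γ c) = act6 γ (toTriple6 c) := by
  obtain ⟨M, N, s, t⟩ := γ
  refine Prod.ext ?_ (Prod.ext ?_ ?_) <;>
  · simp only [toTriple6, act6, sub6, coordAct6, MvPolynomial.smul_eq_C_mul, map_add, map_mul,
      map_pow, MvPolynomial.aeval_X, MvPolynomial.aeval_C, MvPolynomial.algebraMap_eq,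
      Sum.elim_inl, Sum.elim_inr, Fin.sum_univ_two, Matrix.cons_val, map_ofNat]
    ring

theorem toTriple6_injective : Function.Injective (toTriple6 (L := L)) := by
  intro c c' hc
  have key : ∀ x y t u : L, ∀ i : Fin 3,
      ![MvPolynomial.eval (Sum.elim (Sum.elim ![x, y] 1) (Sum.elim ![t, u] 1)) (toTriple6 c).1,
        MvPolynomial.eval (Sum.elim (Sum.elim ![x, y] 1) (Sum.elim ![t, u] 1)) (toTriple6 c).2.1,
        MvPolynomial.eval (Sum.elim (Sum.elim ![x, y] 1) (Sum.elim ![t, u] 1)) (toTriple6 c).2.2] i =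
      ![MvPolynomial.eval (Sum.elim (Sum.elim ![x, y] 1) (Sum.elim ![t, u] 1)) (toTriple6 c').1,
        MvPolynomial.eval (Sum.elim (Sum.elim ![x, y] 1) (Sum.elim ![t, u] 1)) (toTriple6 c').2.1,
        MvPolynomial.eval (Sum.elim (Sum.elim ![x, y] 1) (Sum.elim ![t, u] 1)) (toTriple6 c').2.2] i := by
    intros
    rw [hc]
  simp only [toTriple6, Fin.forall_fin_succ, map_add, map_mul, map_pow, MvPolynomial.eval_X,
    MvPolynomial.eval_C, Sum.elim_inl, Sum.elim_inr, Matrix.cons_val, Pi.one_apply] at key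
  have h₁ := key 1 0 1 0
  have h₂ := key 1 0 0 1
  have h₃ := key 0 1 1 0
  have h₄ := key 0 1 0 1
  have h₅ := key 1 0 1 1
  have h₆ := key 0 1 1 1
  simp at h₁ h₂ h₃ h₄ h₅ h₆
  ext i
  fin_cases i <;> simp <;> grind

theorem coordAct6_one (c : Fin 10 → L) : coordAct6 1 c = c := by
  ext i
  fin_cases i <;> simp [coordAct6]

theorem coordAct6_coordAct6 (γ η : Grp6 L) (c : Fin 10 → L) :
    coordAct6 γ (coordAct6 η c) = coordAct6 (η * γ) c := by
  obtain ⟨M, N, s, t⟩ := γ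
  obtain ⟨M', N', s', t'⟩ := η
  simp only [coordAct6, Prod.mk_mul_mk, Matrix.SpecialLinearGroup.coe_mul, Matrix.mul_apply,
    Fin.sum_univ_two, Units.val_mul, mul_inv, Matrix.cons_val, Matrix.vecCons_inj, and_true]
  refine ⟨?_, ?_, ?_, ?_, ?_, ?_, ?_, ?_, ?_, ?_⟩ <;> ring

/-- Two coordinate vectors lie in the same `G₆`-orbit. -/
def OrbitRel6 (c c' : Fin 10 → L) : Prop := ∃ γ : Grp6 L, c' = coordAct6 γ c

theorem OrbitRel6.symm {c c' : Fin 10 → L} (h : OrbitRel6 c c') : OrbitRel6 c' c := by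
  obtain ⟨γ, rfl⟩ := h
  exact ⟨γ⁻¹, by rw [coordAct6_coordAct6, mul_inv_cancel, coordAct6_one]⟩

theorem OrbitRel6.trans {c c' c'' : Fin 10 → L} (h : OrbitRel6 c c') (h' : OrbitRel6 c' c'') :
    OrbitRel6 c c'' := by
  obtain ⟨γ, rfl⟩ := h
  obtain ⟨η, rfl⟩ := h'
  exact ⟨γ * η, coordAct6_coordAct6 η γ c⟩

theorem stable6_iff {c : Fin 10 → L} :
    Stable6 c ↔ IsZariskiClosed {c' | OrbitRel6 c c'} ∧ {γ | coordAct6 γ c = c}.Finite := by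
  simp only [Stable6, OrbitRel6, ← toTriple6_coordAct6,
    toTriple6_injective.eq_iff]

end Action

section Invariants

variable {L : Type*} [Field L]

/-- The `X`-coefficient of `F₂`. -/
def linX6 {R : Type*} [CommRing R] (c : Fin 10 → R) : R :=
  -c 0 * c 9 ^ 2 - c 2 * c 8 ^ 2 + c 8 * c 6 * c 9

/-- The `Y`-coefficient of `F₂`. -/
def linY6 {R : Type*} [CommRing R] (c : Fin 10 → R) : R :=
  -c 1 * c 9 ^ 2 - c 3 * c 8 ^ 2 + c 8 * c 7 * c 9

/-- The determinant of the linear forms `gX + hY` and `F₂`. -/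
def linDet6 {R : Type*} [CommRing R] (c : Fin 10 → R) : R :=
  c 4 * linY6 c - c 5 * linX6 c

/-- The resultant of the quadratic forms `aT² + jTU + dU²` and `bT² + kTU + eU²`. -/
def res6 {R : Type*} [CommRing R] (c : Fin 10 → R) : R :=
  (c 0 * c 3 - c 1 * c 2) ^ 2 - (c 0 * c 7 - c 1 * c 6) * (c 6 * c 3 - c 7 * c 2)

/-- The degree-12 invariant. -/
def invDelta6 {R : Type*} [CommRing R] (c : Fin 10 → R) : R :=
  linDet6 c ^ 2 * res6 c

/-- The degree-6 invariant: half the polar form of the discriminant of the pencil of quadratic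
forms in `(T, U)`, evaluated at the zeros of `gX + hY` and of `F₂`. -/
def invAlpha6 {R : Type*} [CommRing R] (c : Fin 10 → R) : R :=
  (c 6 ^ 2 - 4 * c 0 * c 2) * (c 5 * linY6 c)
    - (c 6 * c 7 - 2 * c 0 * c 3 - 2 * c 1 * c 2) * (c 5 * linX6 c + c 4 * linY6 c)
    + (c 7 ^ 2 - 4 * c 1 * c 3) * (c 4 * linX6 c)

theorem eq_of_eq_mul_pow {x y d : L} (hd : d = 1) (n : ℕ) (h : x = y * d ^ n) : x = y := by
  rw [h, hd, one_pow, mul_one]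

theorem invariants6_coordAct6 (γ : Grp6 L) (c : Fin 10 → L) :
    invAlpha6 (coordAct6 γ c) = invAlpha6 c ∧ invDelta6 (coordAct6 γ c) = invDelta6 c := by
  obtain ⟨M, N, s, t⟩ := γ
  have hM : M.1 0 0 * M.1 1 1 - M.1 0 1 * M.1 1 0 = 1 := by rw [← Matrix.det_fin_two, M.2]
  have hN : N.1 0 0 * N.1 1 1 - N.1 0 1 * N.1 1 0 = 1 := by rw [← Matrix.det_fin_two, N.2]
  have hs : (s : L) ≠ 0 := s.ne_zero
  have ht : (t : L) ≠ 0 := t.ne_zero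
  set c' := coordAct6 (M, N, s, t) c with hc'
  have hX : linX6 c' = (s : L)⁻¹ * (t : L)⁻¹ ^ 2 * (linX6 c * M.1 0 0 + linY6 c * M.1 1 0) := by
    refine eq_of_eq_mul_pow hN 2 ?_
    simp only [hc', linX6, linY6, coordAct6, Matrix.cons_val]
    ring
  have hY : linY6 c' = (s : L)⁻¹ * (t : L)⁻¹ ^ 2 * (linX6 c * M.1 0 1 + linY6 c * M.1 1 1) := by
    refine eq_of_eq_mul_pow hN 2 ?_
    simp only [hc', linX6, linY6, coordAct6, Matrix.cons_val]
    ring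
  have h4 : c' 4 = (s : L) ^ 3 * (t : L) ^ 2 * (c 4 * M.1 0 0 + c 5 * M.1 1 0) := rfl
  have h5 : c' 5 = (s : L) ^ 3 * (t : L) ^ 2 * (c 4 * M.1 0 1 + c 5 * M.1 1 1) := rfl
  have hDet : linDet6 c' = (s : L) ^ 2 * linDet6 c := by
    refine eq_of_eq_mul_pow hM 1 ?_
    simp only [linDet6, hX, hY, h4, h5]
    field_simp
    ring
  have hRes : res6 c' = (s : L)⁻¹ ^ 4 * res6 c := by
    refine eq_of_eq_mul_pow hM 2 (eq_of_eq_mul_pow hN 4 ?_)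
    simp only [hc', res6, coordAct6, Matrix.cons_val]
    ring
  have hE0 : c' 6 ^ 2 - 4 * c' 0 * c' 2 = (s : L)⁻¹ ^ 2 * ((c 6 ^ 2 - 4 * c 0 * c 2) * M.1 0 0 ^ 2
      + 2 * (c 6 * c 7 - 2 * c 0 * c 3 - 2 * c 1 * c 2) * (M.1 0 0 * M.1 1 0)
      + (c 7 ^ 2 - 4 * c 1 * c 3) * M.1 1 0 ^ 2) := by
    refine eq_of_eq_mul_pow hN 2 ?_
    simp only [hc', coordAct6, Matrix.cons_val]
    ring
  have hE2 : c' 7 ^ 2 - 4 * c' 1 * c' 3 = (s : L)⁻¹ ^ 2 * ((c 6 ^ 2 - 4 * c 0 * c 2) * M.1 0 1 ^ 2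
      + 2 * (c 6 * c 7 - 2 * c 0 * c 3 - 2 * c 1 * c 2) * (M.1 0 1 * M.1 1 1)
      + (c 7 ^ 2 - 4 * c 1 * c 3) * M.1 1 1 ^ 2) := by
    refine eq_of_eq_mul_pow hN 2 ?_
    simp only [hc', coordAct6, Matrix.cons_val]
    ring
  have hE1 : c' 6 * c' 7 - 2 * c' 0 * c' 3 - 2 * c' 1 * c' 2 =
      (s : L)⁻¹ ^ 2 * ((c 6 ^ 2 - 4 * c 0 * c 2) * (M.1 0 0 * M.1 0 1)
      + (c 6 * c 7 - 2 * c 0 * c 3 - 2 * c 1 * c 2) * (M.1 0 0 * M.1 1 1 + M.1 0 1 * M.1 1 0)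
      + (c 7 ^ 2 - 4 * c 1 * c 3) * (M.1 1 0 * M.1 1 1)) := by
    refine eq_of_eq_mul_pow hN 2 ?_
    simp only [hc', coordAct6, Matrix.cons_val]
    ring
  constructor
  · refine eq_of_eq_mul_pow hM 2 ?_
    simp only [invAlpha6, hE0, hE1, hE2, hX, hY, h4, h5]
    field_simp
    ring
  · simp only [invDelta6, hDet, hRes]
    field_simp

theorem OrbitRel6.invAlpha6_eq {c c' : Fin 10 → L} (h : OrbitRel6 c c') :
    invAlpha6 c' = invAlpha6 c := by
  obtain ⟨γ, rfl⟩ := h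
  exact (invariants6_coordAct6 γ c).1

theorem OrbitRel6.invDelta6_eq {c c' : Fin 10 → L} (h : OrbitRel6 c c') :
    invDelta6 c' = invDelta6 c := by
  obtain ⟨γ, rfl⟩ := h
  exact (invariants6_coordAct6 γ c).2

end Invariants

section NormalForm

variable {L : Type*} [Field L]

theorem exists_specialLinear_row (x y : L) (h : x ≠ 0 ∨ y ≠ 0) :
    ∃ M : Matrix.SpecialLinearGroup (Fin 2) L,
      x * M.1 0 0 + y * M.1 1 0 = 0 ∧ x * M.1 0 1 + y * M.1 1 1 = 1 := by
  obtain ⟨u, v, huv⟩ : ∃ u v : L, x * u + y * v = 1 := by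
    rcases h with h | h
    · exact ⟨x⁻¹, 0, by field_simp; simp⟩
    · exact ⟨0, y⁻¹, by field_simp; simp⟩
  refine ⟨⟨!![y, u; -x, v], ?_⟩, ?_, ?_⟩
  · rw [Matrix.det_fin_two_of]; linear_combination huv
  · simp; ring
  · simpa using huv

/-- The vector `bYT² + eYU² + gXW² + (jX + kY)TU + rZUW`. -/
def normalForm6 {R : Type*} [CommRing R] (b e g j k r : R) : Fin 10 → R :=
  ![0, b, 0, e, g, 0, j, k, 0, r]

theorem invAlpha6_normalForm6 (b e g j k r : L) :
    invAlpha6 (normalForm6 b e g j k r) = b * g * j * k * r ^ 2 := by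
  simp [invAlpha6, normalForm6, linX6, linY6]
  ring

theorem invDelta6_normalForm6 (b e g j k r : L) :
    invDelta6 (normalForm6 b e g j k r) = b ^ 3 * e * g ^ 2 * j ^ 2 * r ^ 4 := by
  simp [invDelta6, normalForm6, linX6, linY6, linDet6, res6]
  ring

theorem exists_orbitRel6_third_component (c : Fin 10 → L) (hδ : invDelta6 c ≠ 0) :
    ∃ c', OrbitRel6 c c' ∧ c' 8 = 0 ∧ c' 9 = 1 := by
  have h : c 8 ≠ 0 ∨ c 9 ≠ 0 := by
    by_contra! h
    simp [invDelta6, linDet6, linX6, linY6, h] at hδ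
  obtain ⟨N, hN0, hN1⟩ := exists_specialLinear_row _ _ h
  refine ⟨_, ⟨(1, N, 1, 1), rfl⟩, ?_, ?_⟩
  · simpa [coordAct6] using hN0
  · simpa [coordAct6] using hN1

theorem exists_orbitRel6_leading_coeff (c : Fin 10 → L) (hδ : invDelta6 c ≠ 0) (h8 : c 8 = 0)
    (h9 : c 9 = 1) :
    ∃ c', OrbitRel6 c c' ∧ c' 0 = 0 ∧ c' 1 = 1 ∧ c' 8 = 0 ∧ c' 9 = 1 := by
  have h : c 0 ≠ 0 ∨ c 1 ≠ 0 := by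
    by_contra! h
    simp [invDelta6, linDet6, linX6, linY6, h, h8] at hδ
  obtain ⟨M, hM0, hM1⟩ := exists_specialLinear_row _ _ h
  refine ⟨_, ⟨(M, 1, 1, 1), rfl⟩, ?_, ?_, ?_, ?_⟩
  · simpa [coordAct6] using hM0
  · simpa [coordAct6] using hM1
  · simp [coordAct6, h8]
  · simp [coordAct6, h9]

theorem exists_orbitRel6_unipotent (c : Fin 10 → L) (h0 : c 0 = 0) (h1 : c 1 = 1) (h4 : c 4 ≠ 0)
    (h6 : c 6 ≠ 0) (h8 : c 8 = 0) (h9 : c 9 = 1) :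
    ∃ e k : L, OrbitRel6 c (normalForm6 1 e (c 4) (c 6) k 1) := by
  let γ : Grp6 L :=
    (⟨!![1, -c 5 / c 4; 0, 1], by simp⟩, ⟨!![1, -c 2 / c 6; 0, 1], by simp⟩, 1, 1)
  refine ⟨coordAct6 γ c 3, coordAct6 γ c 7, γ, ?_⟩
  simp only [normalForm6, coordAct6, Matrix.cons_val, Matrix.of_apply, Units.val_one,
    Matrix.vecCons_inj, and_true, h0, h1, h8, h9, γ]
  refine ⟨?_, ?_, ?_, ?_, ?_, ?_, ?_, ?_, ?_, ?_⟩ <;> simp <;> field_simp <;> simp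

/-- Every vector with nonvanishing discriminant lies in the orbit of a normal form. -/
theorem exists_orbitRel6_normalForm6 (c : Fin 10 → L) (hδ : invDelta6 c ≠ 0)
    (hα : invAlpha6 c ^ 2 - 4 * invDelta6 c ≠ 0) :
    ∃ e g j k : L, g ≠ 0 ∧ j ≠ 0 ∧ OrbitRel6 c (normalForm6 1 e g j k 1) := by
  obtain ⟨c₁, hc₁, h8, h9⟩ := exists_orbitRel6_third_component c hδ
  rw [← hc₁.invDelta6_eq] at hδ hα
  rw [← hc₁.invAlpha6_eq] at hα
  obtain ⟨c₂, hc₂, k0, k1, k8, k9⟩ := exists_orbitRel6_leading_coeff c₁ hδ h8 h9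
  rw [← hc₂.invDelta6_eq] at hδ hα
  rw [← hc₂.invAlpha6_eq] at hα
  have k4 : c₂ 4 ≠ 0 := by
    intro h
    simp [invDelta6, linDet6, linX6, h, k8, k0] at hδ
  have k6 : c₂ 6 ≠ 0 := by
    intro h
    apply hα
    simp only [invAlpha6, invDelta6, linDet6, linX6, linY6, res6, h, k8, k0, k9, k1]
    ring
  obtain ⟨e, k, h⟩ := exists_orbitRel6_unipotent c₂ k0 k1 k4 k6 k8 k9
  exact ⟨e, c₂ 4, c₂ 6, k, k4, k6, (hc₁.trans hc₂).trans h⟩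

/-- Normal forms with the same invariants lie in the same orbit. -/
theorem orbitRel6_normalForm6 [IsAlgClosed L] {b e g j k r b' e' g' j' k' r' : L}
    (hb : b ≠ 0) (hg : g ≠ 0) (hj : j ≠ 0) (hr : r ≠ 0)
    (hb' : b' ≠ 0) (hg' : g' ≠ 0) (hj' : j' ≠ 0) (hr' : r' ≠ 0)
    (hα : invAlpha6 (normalForm6 b e g j k r) = invAlpha6 (normalForm6 b' e' g' j' k' r'))
    (hδ : invDelta6 (normalForm6 b e g j k r) = invDelta6 (normalForm6 b' e' g' j' k' r')) :
    OrbitRel6 (normalForm6 b e g j k r) (normalForm6 b' e' g' j' k' r') := by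
  rw [invAlpha6_normalForm6, invAlpha6_normalForm6] at hα
  rw [invDelta6_normalForm6, invDelta6_normalForm6] at hδ
  obtain ⟨s, hs⟩ := IsAlgClosed.exists_pow_nat_eq (g' / g * (b' / b) * (r' / r) ^ 2) two_pos
  obtain ⟨u, hu⟩ := IsAlgClosed.exists_pow_nat_eq (b' / b * (j' / j)) two_pos
  have hs' : s ^ 2 * (g * b * r ^ 2) = g' * b' * r' ^ 2 := by
    rw [hs]
    field_simp
  have hu' : u ^ 2 * (b * j) = b' * j' := by
    rw [hu]
    field_simp
  have hs0 : s ≠ 0 := by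
    rintro rfl
    exact absurd hs'.symm (by simp [hg', hb', hr'])
  have hu0 : u ≠ 0 := by
    rintro rfl
    exact absurd hu'.symm (by simp [hb', hj'])
  have hk : k' * s ^ 2 * j' = k * j := by
    refine mul_left_cancel₀ (mul_ne_zero (mul_ne_zero hg hb) (pow_ne_zero 2 hr)) ?_
    linear_combination k' * j' * hs' - hα
  have he : e' * s ^ 4 * u ^ 2 * j' = e * j := by
    refine mul_left_cancel₀ (mul_ne_zero (mul_ne_zero (pow_ne_zero 2 (mul_ne_zero hg hb))
      (pow_ne_zero 4 hr)) (mul_ne_zero hb hj)) ?_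
    linear_combination e' * j' * (s ^ 2 * (g * b * r ^ 2)) ^ 2 * hu'
      + e' * j' * b' * j' * (s ^ 2 * (g * b * r ^ 2) + g' * b' * r' ^ 2) * hs' - hδ
  have hm : s * (j' / j) ≠ 0 := by simp [*]
  have hl : u * s ≠ 0 := by simp [*]
  have ht : (u * s)⁻¹ * (r / r') ≠ 0 := by simp [*]
  refine ⟨(⟨!![s * (j' / j), 0; 0, (s * (j' / j))⁻¹], ?_⟩, ⟨!![u * s, 0; 0, (u * s)⁻¹], ?_⟩,
    Units.mk0 s hs0, Units.mk0 _ ht), ?_⟩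
  · rw [Matrix.det_fin_two_of, mul_inv_cancel₀ hm]
    simp
  · rw [Matrix.det_fin_two_of, mul_inv_cancel₀ hl]
    simp
  simp only [normalForm6, coordAct6, Matrix.cons_val, Matrix.of_apply, Units.val_mk0,
    Matrix.vecCons_inj, and_true]
  refine ⟨?_, ?_, ?_, ?_, ?_, ?_, ?_, ?_, ?_, ?_⟩
  · simp
  · field_simp
    linear_combination -s ^ 2 * hu'
  · simp
  · field_simp
    linear_combination he
  · field_simp
    refine mul_left_cancel₀ hb ?_
    linear_combination g' * r' ^ 2 * hu' - j' * hs'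
  · simp
  · field_simp
    ring
  · field_simp
    linear_combination s * u * hk
  · simp
  · field_simp
    ring

theorem finite_stabilizer_normalForm6 {b e g j k r : L}
    (hb : b ≠ 0) (hg : g ≠ 0) (hj : j ≠ 0) (hr : r ≠ 0) :
    {γ | coordAct6 γ (normalForm6 b e g j k r) = normalForm6 b e g j k r}.Finite := by
  have key : ∀ γ : Grp6 L, coordAct6 γ (normalForm6 b e g j k r) = normalForm6 b e g j k r →
      (γ.2.2.1 : L) ^ 2 = 1 ∧ (γ.2.2.2 : L) ^ 2 = 1 ∧
      γ.1.1 = !![(γ.2.2.1 : L), 0; 0, (γ.2.2.1 : L)] ∧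
      γ.2.1.1 = !![(γ.2.2.2 : L), 0; 0, (γ.2.2.2 : L)] := by
    rintro ⟨M, N, s, t⟩ h
    have hM : M.1 0 0 * M.1 1 1 - M.1 0 1 * M.1 1 0 = 1 := by rw [← Matrix.det_fin_two, M.2]
    have hN : N.1 0 0 * N.1 1 1 - N.1 0 1 * N.1 1 0 = 1 := by rw [← Matrix.det_fin_two, N.2]
    have hs : (s : L) ≠ 0 := s.ne_zero
    have ht : (t : L) ≠ 0 := t.ne_zero
    simp only [normalForm6, coordAct6, Matrix.cons_val, Matrix.vecCons_inj, and_true] at h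
    obtain ⟨h0, h1, h2, h3, h4, h5, h6, h7, h8, h9⟩ := h
    rw [Matrix.eta_fin_two M.1, Matrix.eta_fin_two N.1]
    have n10 : N.1 1 0 = 0 := by simpa [*] using h8
    have m01 : M.1 0 1 = 0 := by simpa [*] using h5
    rw [n10, mul_zero, sub_zero] at hN
    rw [m01, zero_mul, sub_zero] at hM
    have n00 : N.1 0 0 ≠ 0 := left_ne_zero_of_mul_eq_one hN
    have n11 : N.1 1 1 ≠ 0 := right_ne_zero_of_mul_eq_one hN
    have m00 : M.1 0 0 ≠ 0 := left_ne_zero_of_mul_eq_one hM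
    have m10 : M.1 1 0 = 0 := by simpa [*] using h0
    have n01 : N.1 0 1 = 0 := by simpa [*] using h2
    simp only [n10, m01, m10, n01] at *
    have e9 : N.1 1 1 = t := by
      field_simp at h9
      grind
    have e6 : M.1 0 0 = s := by
      field_simp at h6
      grind
    have e4 : (s : L) ^ 4 * t ^ 2 = 1 := by
      refine mul_left_cancel₀ hg ?_
      rw [e6] at h4
      linear_combination h4
    have e1 : M.1 1 1 * N.1 0 0 ^ 2 = s := by
      field_simp at h1
      grind
    rw [e6] at hM
    rw [e9] at hN
    have e2 : (N.1 0 0) ^ 2 = (s : L) ^ 2 := by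
      linear_combination (s : L) * e1 - N.1 0 0 ^ 2 * hM
    have e3 : (s : L) ^ 2 = 1 := by
      linear_combination e4 - (s : L) ^ 2 * (N.1 0 0 * t + 1) * hN + (s : L) ^ 2 * t ^ 2 * e2
    have e5 : (t : L) ^ 2 = 1 := by
      linear_combination e4 - (t : L) ^ 2 * ((s : L) ^ 2 + 1) * e3
    have e7 : M.1 1 1 = s := by
      linear_combination (s : L) * hM - M.1 1 1 * e3
    have e8 : N.1 0 0 = t := by
      linear_combination (t : L) * hN - N.1 0 0 * e5
    exact ⟨e3, e5, by rw [e6, e7], by rw [e8, e9]⟩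
  have fin : {x : Lˣ | x ^ 2 = 1}.Finite := by
    have : Finite (rootsOfUnity 2 L) := inferInstance
    refine Set.Finite.subset (Set.toFinite (rootsOfUnity 2 L : Set Lˣ)) fun x hx => ?_
    simpa [mem_rootsOfUnity] using hx
  refine Set.Finite.of_injOn (f := fun γ : Grp6 L => γ.2.2) (t := _ ×ˢ _) ?_ ?_ (fin.prod fin)
  · intro γ hγ
    obtain ⟨h₁, h₂, -⟩ := key γ hγ
    exact ⟨Units.ext (by simpa using h₁), Units.ext (by simpa using h₂)⟩
  · rintro ⟨M, N, s, t⟩ hγ ⟨M', N', s', t'⟩ hγ' h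
    obtain ⟨-, -, h₁, h₂⟩ := key _ hγ
    obtain ⟨-, -, h₁', h₂'⟩ := key _ hγ'
    obtain ⟨rfl, rfl⟩ := Prod.mk.inj h
    have hM : M = M' := Subtype.ext (h₁.trans h₁'.symm)
    have hN : N = N' := Subtype.ext (h₂.trans h₂'.symm)
    rw [hM, hN]

theorem stable6_normalForm6 [IsAlgClosed L] {b e g j k r : L}
    (hb : b ≠ 0) (he : e ≠ 0) (hg : g ≠ 0) (hj : j ≠ 0) (hr : r ≠ 0)
    (hk : k ^ 2 - 4 * b * e ≠ 0) : Stable6 (normalForm6 b e g j k r) := by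
  refine stable6_iff.2 ⟨⟨{invAlpha6 MvPolynomial.X
      - MvPolynomial.C (invAlpha6 (normalForm6 b e g j k r)),
    invDelta6 MvPolynomial.X - MvPolynomial.C (invDelta6 (normalForm6 b e g j k r))}, ?_⟩,
    finite_stabilizer_normalForm6 hb hg hj hr⟩
  have evα : ∀ c : Fin 10 → L, MvPolynomial.eval c (invAlpha6 MvPolynomial.X) = invAlpha6 c := by
    simp [invAlpha6, linX6, linY6]
  have evδ : ∀ c : Fin 10 → L, MvPolynomial.eval c (invDelta6 MvPolynomial.X) = invDelta6 c := by
    simp [invDelta6, linDet6, res6, linX6, linY6]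
  ext c
  simp only [Set.mem_ofPred_eq, Set.mem_insert_iff, Set.mem_singleton_iff, forall_eq_or_imp,
    forall_eq, map_sub, evα, evδ, MvPolynomial.eval_C, sub_eq_zero]
  constructor
  · exact fun h => ⟨h.invAlpha6_eq, h.invDelta6_eq⟩
  · rintro ⟨hα, hδ⟩
    have hδ0 : invDelta6 c ≠ 0 := by
      rw [hδ, invDelta6_normalForm6]
      simp [*]
    have hα0 : invAlpha6 c ^ 2 - 4 * invDelta6 c ≠ 0 := by
      rw [hα, hδ, invDelta6_normalForm6, invAlpha6_normalForm6]
      have : (b * g * j * r ^ 2) ^ 2 * (k ^ 2 - 4 * b * e) ≠ 0 := by simp [*]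
      convert this using 1
      ring
    obtain ⟨e', g', j', k', hg', hj', h⟩ := exists_orbitRel6_normalForm6 c hδ0 hα0
    exact (orbitRel6_normalForm6 hb hg hj hr one_ne_zero hg' hj' one_ne_zero
      (by rw [h.invAlpha6_eq, hα]) (by rw [h.invDelta6_eq, hδ])).trans h.symm

/-- In characteristic two the orbit of a normal form with `k = 0` is not closed. -/
theorem not_stable6_normalForm6 [IsAlgClosed L] (h2 : (2 : L) = 0) {b e g j r : L}
    (hb : b ≠ 0) (hj : j ≠ 0) : ¬ Stable6 (normalForm6 b e g j 0 r) := by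
  intro hst
  obtain ⟨P, hP⟩ := (stable6_iff.1 hst).1
  obtain ⟨x, hx⟩ := IsAlgClosed.exists_pow_nat_eq (e / b) two_pos
  have hx' : b * x ^ 2 = e := by
    rw [hx]
    field_simp
  have mem : ∀ l : L, l ≠ 0 →
      OrbitRel6 (normalForm6 b e g j 0 r) ![0, b, x * j, 0, g, 0, l ^ 2 * j, 0, 0, r] := by
    intro l hl
    refine ⟨(⟨!![l ^ 2, 0; 0, (l ^ 2)⁻¹], by simp [hl]⟩,
      ⟨!![l, x * l⁻¹; 0, l⁻¹], by simp [hl]⟩, 1, (Units.mk0 l hl)⁻¹), ?_⟩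
    simp only [normalForm6, coordAct6, Matrix.cons_val, Matrix.of_apply, Units.val_mk0,
      Units.val_one, Units.val_inv_eq_inv_val, Matrix.vecCons_inj, and_true]
    refine ⟨?_, ?_, ?_, ?_, ?_, ?_, ?_, ?_, ?_, ?_⟩
    · simp
    · field_simp
      ring
    · field_simp
      ring
    · field_simp
      linear_combination -hx' - e * h2
    · field_simp
      ring
    · simp
    · field_simp
      ring
    · rw [h2]
      simp
    · simp
    · field_simp
      ring
  let q : Fin 10 → Polynomial L := ![0, Polynomial.C b, Polynomial.C (x * j), 0, Polynomial.C g, 0,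
    Polynomial.X ^ 2 * Polynomial.C j, 0, 0, Polynomial.C r]
  have hq : ∀ l : L, (fun i => Polynomial.eval l (q i)) =
      ![0, b, x * j, 0, g, 0, l ^ 2 * j, 0, 0, r] := by
    intro l
    ext i
    fin_cases i <;> simp [q]
    exact mul_comm _ _
  have ev : ∀ (f : MvPolynomial (Fin 10) L) (l : L), Polynomial.eval l (MvPolynomial.aeval q f) =
      MvPolynomial.eval ![0, b, x * j, 0, g, 0, l ^ 2 * j, 0, 0, r] f := by
    intro f l
    rw [← hq, ← Polynomial.coe_aeval_eq_eval, MvPolynomial.comp_aeval_apply,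
      MvPolynomial.aeval_eq_eval]
  have lim : OrbitRel6 (normalForm6 b e g j 0 r) ![0, b, x * j, 0, g, 0, 0 ^ 2 * j, 0, 0, r] := by
    change _ ∈ {c' | OrbitRel6 (normalForm6 b e g j 0 r) c'}
    rw [hP]
    intro f hf
    have hzero : MvPolynomial.aeval q f * Polynomial.X = 0 := by
      refine Polynomial.funext fun l => ?_
      rcases eq_or_ne l 0 with rfl | hl
      · simp
      · have := mem l hl
        change _ ∈ {c' | OrbitRel6 (normalForm6 b e g j 0 r) c'} at this
        rw [hP] at this
        rw [Polynomial.eval_mul, ev, this f hf]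
        simp
    rw [← ev, (mul_eq_zero.1 hzero).resolve_right Polynomial.X_ne_zero, Polynomial.eval_zero]
  obtain ⟨⟨M, N, s, t⟩, h⟩ := lim
  have hM : M.1 0 0 * M.1 1 1 - M.1 0 1 * M.1 1 0 = 1 := by rw [← Matrix.det_fin_two, M.2]
  have hN : N.1 0 0 * N.1 1 1 - N.1 0 1 * N.1 1 0 = 1 := by rw [← Matrix.det_fin_two, N.2]
  have hN' : N.1 0 0 * N.1 1 1 + N.1 0 1 * N.1 1 0 = 1 := by
    linear_combination hN + N.1 0 1 * N.1 1 0 * h2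
  have h6 := congrFun h 6
  have h7 := congrFun h 7
  simp only [normalForm6, coordAct6, Matrix.cons_val, h2, hN'] at h6 h7
  have m00 : M.1 0 0 = 0 := by simpa [hj] using h6
  have m01 : M.1 0 1 = 0 := by simpa [hj] using h7
  simp [m00, m01] at hM

end NormalForm

section Discriminant

/-- To compute `Δ₆` on a parametrised family it suffices to divide by 16 over `ℤ`. -/
theorem Delta6_eq_of_disc4 {L σ : Type*} [CommRing L] {Q : MvPolynomial (Fin 10) ℤ}
    (hQ : 16 * Q =
      disc4 (beta1 * beta5) (beta1 * beta6 + beta2 * beta5) (beta2 * beta6 + beta3 * beta5)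
        (beta3 * beta6 + beta4 * beta5) (beta4 * beta6))
    (y : Fin 10 → MvPolynomial σ ℤ) (E : MvPolynomial σ ℤ) (f : σ → L)
    (h : MvPolynomial.aeval y (disc4 (beta1 * beta5) (beta1 * beta6 + beta2 * beta5)
      (beta2 * beta6 + beta3 * beta5) (beta3 * beta6 + beta4 * beta5) (beta4 * beta6)) = 16 * E) :
    Delta6 Q (fun i => MvPolynomial.aeval f (y i)) = MvPolynomial.aeval f E := by
  rw [← hQ, map_mul, map_ofNat] at h
  have h16 : (16 : MvPolynomial σ ℤ) ≠ 0 := by norm_num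
  rw [← mul_left_cancel₀ h16 h, Delta6, ← MvPolynomial.comp_aeval_apply]

end Discriminant

/-
STATEMENT 15 (Corollary 5.7): let p be a prime and L an algebraic closure of 𝔽_p.
(1) There is a stable vector in V₆ with all coordinates in the prime subfield 𝔽_p; and
for v = aXT² + dXU² + hYW² + (jX+kY)TU + rZUW one has
Δ₆(v) = 16a⁹d³h⁶k⁶r¹² − 8a⁸d²h⁶j²k⁶r¹² + a⁷dh⁶j⁴k⁶r¹².
(2) For b, j, e, g, r ∈ Lˣ, the dual cyclic vector v = bYT² + jXTU + eYU² + gXW² + rZUW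
satisfies Δ₆(v) = 16b⁹e³g⁶j⁶r¹², and is stable if and only if p ≠ 2.
Coordinates are in the order a,b,d,e,g,h,j,k,o,r.
-/
theorem stable6_prime_field_and_dual_cyclic
    (p : ℕ) (hp : p.Prime)
    {L : Type*} [Field L] [IsAlgClosed L] [CharP L p]
    (Q : MvPolynomial (Fin 10) ℤ)
    (hQ : 16 * Q =
      disc4 (beta1 * beta5) (beta1 * beta6 + beta2 * beta5) (beta2 * beta6 + beta3 * beta5)
        (beta3 * beta6 + beta4 * beta5) (beta4 * beta6)) :
    ((∃ c : Fin 10 → L, (∀ i, ∃ z : ℤ, c i = (z : L)) ∧ Stable6 c) ∧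
      (∀ a d h j k r : L,
        Delta6 Q ![a, 0, d, 0, 0, h, j, k, 0, r] =
          16 * a ^ 9 * d ^ 3 * h ^ 6 * k ^ 6 * r ^ 12
            - 8 * a ^ 8 * d ^ 2 * h ^ 6 * j ^ 2 * k ^ 6 * r ^ 12
            + a ^ 7 * d * h ^ 6 * j ^ 4 * k ^ 6 * r ^ 12)) ∧
    (∀ b j e g r : Lˣ,
      Delta6 Q ![0, (b : L), 0, (e : L), (g : L), 0, (j : L), 0, 0, (r : L)] =
        16 * (b : L) ^ 9 * (e : L) ^ 3 * (g : L) ^ 6 * (j : L) ^ 6 * (r : L) ^ 12 ∧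
      (Stable6 ![0, (b : L), 0, (e : L), (g : L), 0, (j : L), 0, 0, (r : L)] ↔ p ≠ 2)) := by
  have two_iff : (2 : L) = 0 ↔ p = 2 := by
    rw [← Nat.cast_ofNat, CharP.cast_eq_zero_iff L p, Nat.prime_dvd_prime_iff_eq hp Nat.prime_two]
  refine ⟨⟨?_, fun a d h j k r => ?_⟩, fun b j e g r => ⟨?_, ?_⟩⟩
  · by_cases h : p = 2
    · have h2 := two_iff.2 h
      refine ⟨normalForm6 1 1 1 1 1 1, fun i => ?_, stable6_normalForm6 one_ne_zero one_ne_zero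
        one_ne_zero one_ne_zero one_ne_zero ?_⟩
      · refine ⟨normalForm6 1 1 1 1 1 1 i, ?_⟩
        fin_cases i <;> simp [normalForm6]
      · rw [show (1 : L) ^ 2 - 4 * 1 * 1 = 1 by linear_combination -2 * h2]
        exact one_ne_zero
    · have h2 := mt two_iff.1 h
      refine ⟨normalForm6 1 1 1 1 0 1, fun i => ?_, stable6_normalForm6 one_ne_zero one_ne_zero
        one_ne_zero one_ne_zero one_ne_zero ?_⟩
      · refine ⟨normalForm6 1 1 1 1 0 1 i, ?_⟩
        fin_cases i <;> simp [normalForm6]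
      · rw [show (0 : L) ^ 2 - 4 * 1 * 1 = -(2 * 2) by ring]
        exact neg_ne_zero.2 (mul_ne_zero h2 h2)
  · have key := Delta6_eq_of_disc4 hQ
      ![MvPolynomial.X 0, 0, MvPolynomial.X 1, 0, 0, MvPolynomial.X 2, MvPolynomial.X 3,
        MvPolynomial.X 4, 0, MvPolynomial.X 5]
      (16 * MvPolynomial.X 0 ^ 9 * MvPolynomial.X 1 ^ 3 * MvPolynomial.X 2 ^ 6 *
          MvPolynomial.X 4 ^ 6 * MvPolynomial.X 5 ^ 12
        - 8 * MvPolynomial.X 0 ^ 8 * MvPolynomial.X 1 ^ 2 * MvPolynomial.X 2 ^ 6 *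
          MvPolynomial.X 3 ^ 2 * MvPolynomial.X 4 ^ 6 * MvPolynomial.X 5 ^ 12
        + MvPolynomial.X 0 ^ 7 * MvPolynomial.X 1 * MvPolynomial.X 2 ^ 6 *
          MvPolynomial.X 3 ^ 4 * MvPolynomial.X 4 ^ 6 * MvPolynomial.X 5 ^ 12)
      ![a, d, h, j, k, r] (by
        simp only [disc4, beta1, beta2, beta3, beta4, beta5, beta6, map_add, map_sub, map_mul,
          map_pow, map_neg, map_ofNat, MvPolynomial.aeval_X, Matrix.cons_val]
        ring)
    convert key using 2
    · ext i
      fin_cases i <;> simp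
    · simp
  · have key := Delta6_eq_of_disc4 hQ
      ![0, MvPolynomial.X 0, 0, MvPolynomial.X 1, MvPolynomial.X 2, 0, MvPolynomial.X 3, 0, 0,
        MvPolynomial.X 4]
      (16 * MvPolynomial.X 0 ^ 9 * MvPolynomial.X 1 ^ 3 * MvPolynomial.X 2 ^ 6 *
        MvPolynomial.X 3 ^ 6 * MvPolynomial.X 4 ^ 12)
      ![(b : L), e, g, j, r] (by
        simp only [disc4, beta1, beta2, beta3, beta4, beta5, beta6, map_add, map_sub, map_mul,
          map_pow, map_neg, map_ofNat, MvPolynomial.aeval_X, Matrix.cons_val]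
        ring)
    convert key using 2
    · ext i
      fin_cases i <;> simp
    · simp
  · rw [Ne, ← two_iff]
    refine ⟨fun hst h2 => not_stable6_normalForm6 h2 b.ne_zero j.ne_zero hst, fun h2 => ?_⟩
    refine stable6_normalForm6 b.ne_zero e.ne_zero g.ne_zero j.ne_zero r.ne_zero ?_
    rw [show (0 : L) ^ 2 - 4 * b * e = -(2 * 2 * b * e) by ring]
    simp [h2]
end

section
/- A vector v ∈ V₈ is stable for the action of G₈ = SL₂(L)×Lˣ×Lˣ×Lˣ if and only if Δ₈(v) ≠ 0 in L. -/
/- The element (F₁, F₂, f, g) of V₈ = P₂ ⊕ P₁ ⊕ L ⊕ L with coordinates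
c = (a,b,c,d,e,f,g): F₁ = aX² + bXY + cY², F₂ = dX + eY (X = X 0, Y = X 1). -/
noncomputable def toV8 {L : Type*} [CommRing L] (c : Fin 7 → L) :
    MvPolynomial (Fin 2) L × MvPolynomial (Fin 2) L × L × L :=
  (MvPolynomial.C (c 0) * MvPolynomial.X 0 ^ 2
      + MvPolynomial.C (c 1) * MvPolynomial.X 0 * MvPolynomial.X 1
      + MvPolynomial.C (c 2) * MvPolynomial.X 1 ^ 2,
   MvPolynomial.C (c 3) * MvPolynomial.X 0 + MvPolynomial.C (c 4) * MvPolynomial.X 1,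
   c 5, c 6)

/- Linear substitution of the variables (X,Y) by a matrix A ∈ SL₂(L). -/
noncomputable def sub8 {L : Type*} [CommRing L] (A : Matrix.SpecialLinearGroup (Fin 2) L)
    (v : MvPolynomial (Fin 2) L) : MvPolynomial (Fin 2) L :=
  MvPolynomial.aeval (fun i => ∑ j : Fin 2, MvPolynomial.C (A.1 i j) * MvPolynomial.X j) v

/- The action of G₈ = SL₂(L) × Lˣ × Lˣ × Lˣ on V₈:
(A, t₁, t₂, t₃)·(F₁, F₂, f, g) = (t₂⁻¹·(F₁∘A), t₃⁻¹·(F₂∘A), t₁⁻¹·f, t₁²t₂³t₃²·g). -/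
noncomputable def act8 {L : Type*} [Field L]
    (g : Matrix.SpecialLinearGroup (Fin 2) L × Lˣ × Lˣ × Lˣ)
    (v : MvPolynomial (Fin 2) L × MvPolynomial (Fin 2) L × L × L) :
    MvPolynomial (Fin 2) L × MvPolynomial (Fin 2) L × L × L :=
  (((g.2.2.1 : L))⁻¹ • sub8 g.1 v.1,
   ((g.2.2.2 : L))⁻¹ • sub8 g.1 v.2.1,
   ((g.2.1 : L))⁻¹ * v.2.2.1,
   (g.2.1 : L) ^ 2 * (g.2.2.1 : L) ^ 3 * (g.2.2.2 : L) ^ 2 * v.2.2.2)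

/- Δ₈(v) = (f²g(b²−4ac)(cd²−bde+ae²))² = f⁴g²·disc(F₁)·disc(F₁F₂). -/
def Delta8 {L : Type*} [CommRing L] (c : Fin 7 → L) : L :=
  ((c 5) ^ 2 * c 6 * ((c 1) ^ 2 - 4 * c 0 * c 2)
      * (c 2 * (c 3) ^ 2 - c 1 * c 3 * c 4 + c 0 * (c 4) ^ 2)) ^ 2

/- Stability: the orbit of v (in the coordinate space of V₈ with respect to its
monomial basis) is Zariski-closed and the stabilizer of v in G₈ is finite. -/
def Stable8 {L : Type*} [Field L] (c : Fin 7 → L) : Prop :=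
  IsZariskiClosed {c' : Fin 7 → L |
    ∃ g : Matrix.SpecialLinearGroup (Fin 2) L × Lˣ × Lˣ × Lˣ,
      toV8 c' = act8 g (toV8 c)} ∧
  {g : Matrix.SpecialLinearGroup (Fin 2) L × Lˣ × Lˣ × Lˣ |
      act8 g (toV8 c) = toV8 c}.Finite

/- Coordinates of `act8 g (toV8 c)` with respect to the monomial basis. -/
def coordAct8 {L : Type*} [Field L]
    (g : Matrix.SpecialLinearGroup (Fin 2) L × Lˣ × Lˣ × Lˣ) (c : Fin 7 → L) : Fin 7 → L :=
  ![(g.2.2.1 : L)⁻¹ * (c 0 * g.1.1 0 0 ^ 2 + c 1 * g.1.1 0 0 * g.1.1 1 0 + c 2 * g.1.1 1 0 ^ 2),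
    (g.2.2.1 : L)⁻¹ * (2 * c 0 * g.1.1 0 0 * g.1.1 0 1
      + c 1 * (g.1.1 0 0 * g.1.1 1 1 + g.1.1 0 1 * g.1.1 1 0) + 2 * c 2 * g.1.1 1 0 * g.1.1 1 1),
    (g.2.2.1 : L)⁻¹ * (c 0 * g.1.1 0 1 ^ 2 + c 1 * g.1.1 0 1 * g.1.1 1 1 + c 2 * g.1.1 1 1 ^ 2),
    (g.2.2.2 : L)⁻¹ * (c 3 * g.1.1 0 0 + c 4 * g.1.1 1 0),
    (g.2.2.2 : L)⁻¹ * (c 3 * g.1.1 0 1 + c 4 * g.1.1 1 1),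
    (g.2.1 : L)⁻¹ * c 5,
    (g.2.1 : L) ^ 2 * (g.2.2.1 : L) ^ 3 * (g.2.2.2 : L) ^ 2 * c 6]

theorem toV8_injective {L : Type*} [CommRing L] :
    Function.Injective (toV8 : (Fin 7 → L) → _) := by
  intro c c' h
  simp only [toV8, Prod.mk.injEq] at h
  obtain ⟨h1, h2, h5, h6⟩ := h
  have e1 := fun x y => congrArg (MvPolynomial.coeff (Finsupp.single 0 x + Finsupp.single 1 y)) h1
  have e2 := fun x y => congrArg (MvPolynomial.coeff (Finsupp.single 0 x + Finsupp.single 1 y)) h2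
  have hq : ∀ (a b c : L) (x y : ℕ), MvPolynomial.coeff
      (Finsupp.single 0 x + Finsupp.single 1 y : Fin 2 →₀ ℕ)
      (MvPolynomial.C a * MvPolynomial.X 0 ^ 2
        + MvPolynomial.C b * MvPolynomial.X 0 * MvPolynomial.X 1
        + MvPolynomial.C c * MvPolynomial.X 1 ^ 2)
      = (if x = 2 ∧ y = 0 then a else 0) + (if x = 1 ∧ y = 1 then b else 0)
        + (if x = 0 ∧ y = 2 then c else 0) := by
    intro a b c x y
    simp [MvPolynomial.X, MvPolynomial.monomial_pow, MvPolynomial.C_mul_monomial,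
      MvPolynomial.monomial_mul, MvPolynomial.coeff_monomial, Finsupp.ext_iff, Fin.forall_fin_two,
      eq_comm]
  have hl : ∀ (a b : L) (x y : ℕ), MvPolynomial.coeff
      (Finsupp.single 0 x + Finsupp.single 1 y : Fin 2 →₀ ℕ)
      (MvPolynomial.C a * MvPolynomial.X 0 + MvPolynomial.C b * MvPolynomial.X 1)
      = (if x = 1 ∧ y = 0 then a else 0) + (if x = 0 ∧ y = 1 then b else 0) := by
    intro a b x y
    simp [MvPolynomial.X, MvPolynomial.C_mul_monomial,
      MvPolynomial.coeff_monomial, Finsupp.ext_iff, Fin.forall_fin_two, eq_comm]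
  simp only [hq] at e1
  simp only [hl] at e2
  ext i
  fin_cases i
  · simpa using e1 2 0
  · simpa using e1 1 1
  · simpa using e1 0 2
  · simpa using e2 1 0
  · simpa using e2 0 1
  · exact h5
  · exact h6

theorem act8_toV8 {L : Type*} [Field L]
    (g : Matrix.SpecialLinearGroup (Fin 2) L × Lˣ × Lˣ × Lˣ) (c : Fin 7 → L) :
    act8 g (toV8 c) = toV8 (coordAct8 g c) := by
  simp only [act8, toV8, sub8, coordAct8, Prod.mk.injEq]
  refine ⟨?_, ?_, rfl, rfl⟩
  · have h2 : (MvPolynomial.C 2 : MvPolynomial (Fin 2) L) = 2 := map_ofNat _ 2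
    simp [MvPolynomial.smul_eq_C_mul, MvPolynomial.algebraMap_eq, Fin.sum_univ_two, h2]
    ring
  · simp [MvPolynomial.smul_eq_C_mul, MvPolynomial.algebraMap_eq, Fin.sum_univ_two]
    ring

theorem coordAct8_mul {L : Type*} [Field L]
    (g h : Matrix.SpecialLinearGroup (Fin 2) L × Lˣ × Lˣ × Lˣ) (c : Fin 7 → L) :
    coordAct8 (g * h) c = coordAct8 h (coordAct8 g c) := by
  ext i
  fin_cases i <;>
  · simp [coordAct8, Matrix.mul_apply, Fin.sum_univ_two]
    ring

theorem coordAct8_one {L : Type*} [Field L] (c : Fin 7 → L) : coordAct8 1 c = c := by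
  ext i
  fin_cases i <;> simp [coordAct8]

theorem coordAct8_inv_coordAct8 {L : Type*} [Field L]
    (g : Matrix.SpecialLinearGroup (Fin 2) L × Lˣ × Lˣ × Lˣ) (c : Fin 7 → L) :
    coordAct8 g⁻¹ (coordAct8 g c) = c := by
  rw [← coordAct8_mul, mul_inv_cancel, coordAct8_one]

def orbit8 {L : Type*} [Field L] (c : Fin 7 → L) : Set (Fin 7 → L) :=
  Set.range fun g => coordAct8 g c

theorem stable8_iff {L : Type*} [Field L] (c : Fin 7 → L) :
    Stable8 c ↔ IsZariskiClosed (orbit8 c) ∧ {g | coordAct8 g c = c}.Finite := by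
  simp only [Stable8, act8_toV8, toV8_injective.eq_iff, orbit8, Set.range, eq_comm]

theorem orbit8_coordAct8 {L : Type*} [Field L]
    (g : Matrix.SpecialLinearGroup (Fin 2) L × Lˣ × Lˣ × Lˣ) (c : Fin 7 → L) :
    orbit8 (coordAct8 g c) = orbit8 c := by
  ext x
  constructor
  · rintro ⟨h, rfl⟩
    exact ⟨g * h, coordAct8_mul g h c⟩
  · rintro ⟨h, rfl⟩
    refine ⟨g⁻¹ * h, ?_⟩
    simp only [coordAct8_mul, coordAct8_inv_coordAct8]

/- A Zariski closed set containing the curve `s ↦ (s ^ wᵢ * cᵢ)` for `s ≠ 0` contains its limit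
at `s = 0`. -/
theorem IsZariskiClosed.limit_mem {n : ℕ} {L : Type*} [Field L] [Infinite L]
    {S : Set (Fin n → L)} (hS : IsZariskiClosed S) (w : Fin n → ℕ) (c : Fin n → L)
    (h : ∀ s : L, s ≠ 0 → (fun i => s ^ w i * c i) ∈ S) :
    (fun i => 0 ^ w i * c i) ∈ S := by
  obtain ⟨P, rfl⟩ := hS
  intro p hp
  let q : Polynomial L :=
    MvPolynomial.aeval (fun i => Polynomial.X ^ w i * Polynomial.C (c i)) p
  have hq : ∀ s : L, q.eval s = MvPolynomial.eval (fun i => s ^ w i * c i) p := by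
    intro s
    simp only [q]
    rw [← MvPolynomial.eval₂_id, ← Polynomial.coe_evalRingHom, MvPolynomial.aeval_def,
      MvPolynomial.eval₂_comp_left]
    congr 1
    · ext x
      simp
    · ext i
      simp
      ring
  have hzero : q = 0 := by
    refine Polynomial.eq_zero_of_infinite_isRoot q
      (Set.Infinite.mono (s := {(0 : L)}ᶜ) ?_ (Set.finite_singleton 0).infinite_compl)
    intro s hs
    exact (hq s).trans (h s hs p hp)
  rw [← hq, hzero, Polynomial.eval_zero]

section Weights

variable {L : Type*} [Field L]

/- The diagonal torus element `(diag (k, k⁻¹), t₁, t₂, t₃)`. -/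
def torus8 (k t₁ t₂ t₃ : Lˣ) : Matrix.SpecialLinearGroup (Fin 2) L × Lˣ × Lˣ × Lˣ :=
  (⟨!![(k : L), 0; 0, (k⁻¹ : Lˣ)], by simp⟩, t₁, t₂, t₃)

theorem coordAct8_torus8 (k t₁ t₂ t₃ : Lˣ) (c : Fin 7 → L) :
    coordAct8 (torus8 k t₁ t₂ t₃) c =
      ![(t₂ : L)⁻¹ * (k : L) ^ 2 * c 0, (t₂ : L)⁻¹ * c 1, (t₂ : L)⁻¹ * (k : L)⁻¹ ^ 2 * c 2,
        (t₃ : L)⁻¹ * k * c 3, (t₃ : L)⁻¹ * (k : L)⁻¹ * c 4, (t₁ : L)⁻¹ * c 5,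
        (t₁ : L) ^ 2 * (t₂ : L) ^ 3 * (t₃ : L) ^ 2 * c 6] := by
  ext i
  fin_cases i <;> simp [coordAct8, torus8] <;> ring

theorem orbit8_apply_five_ne_zero {c x : Fin 7 → L} (hx : x ∈ orbit8 c) (h : c 5 ≠ 0) :
    x 5 ≠ 0 := by
  obtain ⟨g, rfl⟩ := hx
  simp [coordAct8, h]

theorem orbit8_apply_six_ne_zero {c x : Fin 7 → L} (hx : x ∈ orbit8 c) (h : c 6 ≠ 0) :
    x 6 ≠ 0 := by
  obtain ⟨g, rfl⟩ := hx
  simp [coordAct8, h]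

theorem coordAct8_linear_eq_zero {c : Fin 7 → L} (h3 : c 3 = 0) (h4 : c 4 = 0)
    (g : Matrix.SpecialLinearGroup (Fin 2) L × Lˣ × Lˣ × Lˣ) :
    coordAct8 g c 3 = 0 ∧ coordAct8 g c 4 = 0 := by
  simp [coordAct8, h3, h4]

theorem orbit8_linear_ne_zero {c x : Fin 7 → L} (hx : x ∈ orbit8 c)
    (h : ¬ (c 3 = 0 ∧ c 4 = 0)) : ¬ (x 3 = 0 ∧ x 4 = 0) := by
  obtain ⟨g, rfl⟩ := hx
  rintro ⟨h3, h4⟩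
  apply h
  have := coordAct8_linear_eq_zero h3 h4 g⁻¹
  rwa [coordAct8_inv_coordAct8] at this

theorem apply_five_ne_zero_of_stable8 [Infinite L] {c : Fin 7 → L} (hc : Stable8 c) :
    c 5 ≠ 0 := by
  rw [stable8_iff] at hc
  obtain ⟨hcl, hfin⟩ := hc
  intro h5
  by_cases h6 : c 6 = 0
  · have : Infinite {x : L // x ≠ 0} :=
      (Set.finite_singleton (0 : L)).infinite_compl.to_subtype
    have : Infinite Lˣ := unitsEquivNeZero.infinite_iff.mpr this
    refine Set.infinite_range_of_injective (f := fun t : Lˣ => torus8 1 t 1 1) ?_ (hfin.subset ?_)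
    · intro s t hst
      exact congrArg (fun g => g.2.1) hst
    · rintro _ ⟨t, rfl⟩
      simp only [Set.mem_ofPred_eq, coordAct8_torus8]
      ext i
      fin_cases i <;> simp [h5, h6]
  · refine orbit8_apply_six_ne_zero (hcl.limit_mem ![0, 0, 0, 0, 0, 0, 2] c ?_) h6 (by simp)
    intro s hs
    refine ⟨torus8 1 (Units.mk0 s hs) 1 1, ?_⟩
    simp only [coordAct8_torus8]
    ext i
    fin_cases i <;> simp [h5]

theorem apply_six_ne_zero_of_stable8 [Infinite L] {c : Fin 7 → L} (hc : Stable8 c) :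
    c 6 ≠ 0 := by
  have h5 := apply_five_ne_zero_of_stable8 hc
  rw [stable8_iff] at hc
  intro h6
  refine orbit8_apply_five_ne_zero (hc.1.limit_mem ![0, 0, 0, 0, 0, 1, 0] c ?_) h5 (by simp)
  intro s hs
  refine ⟨torus8 1 (Units.mk0 s hs)⁻¹ 1 1, ?_⟩
  simp only [coordAct8_torus8]
  ext i
  fin_cases i <;> simp [h6]

theorem linear_ne_zero_of_stable8 [Infinite L] {c : Fin 7 → L} (hc : Stable8 c) :
    ¬ (c 3 = 0 ∧ c 4 = 0) := by
  have h6 := apply_six_ne_zero_of_stable8 hc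
  rw [stable8_iff] at hc
  rintro ⟨h3, h4⟩
  refine orbit8_apply_six_ne_zero (hc.1.limit_mem ![0, 0, 0, 0, 0, 0, 2] c ?_) h6 (by simp)
  intro s hs
  refine ⟨torus8 1 1 1 (Units.mk0 s hs), ?_⟩
  simp only [coordAct8_torus8]
  ext i
  fin_cases i <;> simp [h3, h4]

theorem not_isZariskiClosed_orbit8_of_square [Infinite L] {c : Fin 7 → L}
    (h1 : c 1 = 0) (h2 : c 2 = 0) (h : ¬ (c 3 = 0 ∧ c 4 = 0)) :
    ¬ IsZariskiClosed (orbit8 c) := by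
  intro hcl
  refine orbit8_linear_ne_zero (hcl.limit_mem ![0, 0, 0, 4, 2, 0, 0] c ?_) h (by simp)
  intro s hs
  let u := Units.mk0 s hs
  refine ⟨torus8 u 1 (u ^ 2) (u⁻¹ ^ 3), ?_⟩
  simp only [coordAct8_torus8]
  ext i
  fin_cases i <;> simp [h1, h2, u] <;> field_simp <;> simp

theorem not_isZariskiClosed_orbit8_of_common_root [Infinite L] {c : Fin 7 → L}
    (h2 : c 2 = 0) (h4 : c 4 = 0) (h3 : c 3 ≠ 0) :
    ¬ IsZariskiClosed (orbit8 c) := by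
  intro hcl
  refine orbit8_linear_ne_zero (hcl.limit_mem ![2, 0, 0, 1, 0, 0, 0] c ?_)
    (by simp [h3]) (by simp [h4])
  intro s hs
  refine ⟨torus8 (Units.mk0 s hs) 1 1 1, ?_⟩
  simp only [coordAct8_torus8]
  ext i
  fin_cases i <;> simp [h2, h4]

theorem exists_specialLinearGroup_row (p q : L) (h : ¬ (p = 0 ∧ q = 0)) :
    ∃ r t : L, p * t - q * r = 1 := by
  by_cases hp : p = 0
  · have hq : q ≠ 0 := fun hq => h ⟨hp, hq⟩
    exact ⟨-q⁻¹, 0, by field_simp; ring⟩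
  · exact ⟨0, p⁻¹, by field_simp; ring⟩

theorem exists_binary_quadratic_factorization [IsAlgClosed L] (a b c : L) :
    ∃ α β γ δ : L, a = α * γ ∧ b = α * δ + β * γ ∧ c = β * δ := by
  by_cases ha : a = 0
  · exact ⟨0, 1, b, c, by simp [ha], by simp, by simp⟩
  · obtain ⟨x, hx⟩ := IsAlgClosed.exists_root
      (Polynomial.C a * Polynomial.X ^ 2 + Polynomial.C b * Polynomial.X + Polynomial.C c)
      (by rw [Polynomial.degree_quadratic ha]; decide)
    simp only [Polynomial.IsRoot.def, Polynomial.eval_add, Polynomial.eval_mul,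
      Polynomial.eval_C, Polynomial.eval_pow, Polynomial.eval_X] at hx
    exact ⟨1, -x, a, b + a * x, by ring, by ring, by linear_combination hx⟩

theorem exists_eq_mul_sq_of_discrim_eq_zero [IsAlgClosed L] (a b c : L)
    (h : b ^ 2 - 4 * a * c = 0) :
    ∃ m p q : L, ¬ (p = 0 ∧ q = 0) ∧ a = m * p ^ 2 ∧ b = 2 * m * p * q ∧ c = m * q ^ 2 := by
  obtain ⟨α, β, γ, δ, rfl, rfl, rfl⟩ := exists_binary_quadratic_factorization a b c
  have hdet : α * δ - β * γ = 0 := by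
    rw [← sq_eq_zero_iff]
    linear_combination h
  by_cases hα : α = 0
  · by_cases hβ : β = 0
    · exact ⟨0, 1, 0, by simp, by simp [hα], by simp [hα, hβ], by simp [hβ]⟩
    · have hγ : γ = 0 := by simpa [hα, hβ] using hdet
      exact ⟨δ / β, α, β, by simp [hβ], by simp [hα], by simp [hα, hγ], by field_simp⟩
  · refine ⟨γ / α, α, β, by simp [hα], by field_simp, ?_, ?_⟩
    · field_simp
      linear_combination hdet
    · field_simp
      linear_combination β * hdet

theorem discrim_ne_zero_of_stable8 [IsAlgClosed L] {c : Fin 7 → L} (hc : Stable8 c) :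
    c 1 ^ 2 - 4 * c 0 * c 2 ≠ 0 := by
  have : Infinite L := IsAlgClosed.instInfinite
  have hlin := linear_ne_zero_of_stable8 hc
  rw [stable8_iff] at hc
  intro h
  obtain ⟨m, p, q, hpq, h0, h1, h2⟩ := exists_eq_mul_sq_of_discrim_eq_zero _ _ _ h
  obtain ⟨r, t, hdet⟩ := exists_specialLinearGroup_row p q hpq
  let B : Matrix.SpecialLinearGroup (Fin 2) L × Lˣ × Lˣ × Lˣ :=
    (⟨!![t, -q; -r, p], by rw [Matrix.det_fin_two_of]; linear_combination hdet⟩, 1, 1, 1)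
  refine not_isZariskiClosed_orbit8_of_square (c := coordAct8 B c) ?_ ?_ ?_ ?_
  · simp [coordAct8, B, h0, h1, h2]
    ring
  · simp [coordAct8, B, h0, h1, h2]
    ring
  · exact orbit8_linear_ne_zero ⟨B, rfl⟩ hlin
  · rw [orbit8_coordAct8]
    exact hc.1

theorem resultant_ne_zero_of_stable8 [Infinite L] {c : Fin 7 → L} (hc : Stable8 c) :
    c 2 * c 3 ^ 2 - c 1 * c 3 * c 4 + c 0 * c 4 ^ 2 ≠ 0 := by
  have hlin := linear_ne_zero_of_stable8 hc
  rw [stable8_iff] at hc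
  intro h
  obtain ⟨r, t, hdet⟩ := exists_specialLinearGroup_row (c 3) (c 4) hlin
  let B : Matrix.SpecialLinearGroup (Fin 2) L × Lˣ × Lˣ × Lˣ :=
    (⟨!![t, -c 4; -r, c 3], by rw [Matrix.det_fin_two_of]; linear_combination hdet⟩, 1, 1, 1)
  refine not_isZariskiClosed_orbit8_of_common_root (c := coordAct8 B c) ?_ ?_ ?_ ?_
  · simp [coordAct8, B]
    linear_combination h
  · simp [coordAct8, B]
    ring
  · have : coordAct8 B c 3 = 1 := by
      simp [coordAct8, B]
      linear_combination hdet
    simp [this]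
  · rw [orbit8_coordAct8]
    exact hc.1

end Weights

section Invariant

variable {L : Type*} [Field L]

/- The invariant whose square is `Delta8`. -/
def invariant8 (c : Fin 7 → L) : L :=
  c 5 ^ 2 * c 6 * (c 1 ^ 2 - 4 * c 0 * c 2) * (c 2 * c 3 ^ 2 - c 1 * c 3 * c 4 + c 0 * c 4 ^ 2)

theorem invariant8_coordAct8 (g : Matrix.SpecialLinearGroup (Fin 2) L × Lˣ × Lˣ × Lˣ)
    (c : Fin 7 → L) : invariant8 (coordAct8 g c) = invariant8 c := by
  obtain ⟨A, t₁, t₂, t₃⟩ := g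
  have hA : A.1 0 0 * A.1 1 1 - A.1 0 1 * A.1 1 0 = 1 := by
    rw [← Matrix.det_fin_two, A.2]
  have key : invariant8 (coordAct8 (A, t₁, t₂, t₃) c) =
      (A.1 0 0 * A.1 1 1 - A.1 0 1 * A.1 1 0) ^ 4 * invariant8 c := by
    simp [invariant8, coordAct8]
    field_simp
    ring
  rw [key, hA, one_pow, one_mul]

/- The normal form `(XY, X + Y, 1, y)`. -/
def normalForm8 (y : L) : Fin 7 → L := ![0, 1, 0, 1, 1, 1, y]

theorem exists_coordAct8_normalForm8 [IsAlgClosed L] {c : Fin 7 → L} (hc : invariant8 c ≠ 0) :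
    ∃ g, coordAct8 g (normalForm8 (-invariant8 c)) = c := by
  suffices h : ∃ g y, coordAct8 g (normalForm8 y) = c by
    obtain ⟨g, y, h⟩ := h
    have hy := invariant8_coordAct8 g (normalForm8 y)
    rw [h] at hy
    have : -invariant8 c = y := by
      rw [hy]
      simp [invariant8, normalForm8]
    exact ⟨g, this ▸ h⟩
  have hc' := hc
  simp only [invariant8, mul_ne_zero_iff] at hc'
  obtain ⟨⟨⟨h5, h6⟩, hD⟩, hR⟩ := hc'
  replace h5 : c 5 ≠ 0 := fun h => h5 (by simp [h])
  obtain ⟨α, β, γ, δ, h0, h1, h2⟩ := exists_binary_quadratic_factorization (c 0) (c 1) (c 2)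
  obtain ⟨w, hw⟩ : ∃ w, w = α * δ - β * γ := ⟨_, rfl⟩
  have hw0 : w ≠ 0 := by
    rintro rfl
    apply hD
    rw [h0, h1, h2]
    linear_combination (-(α * δ - β * γ)) * hw
  -- coefficients of the linear form in the basis of the two factors, up to the factor `w`
  obtain ⟨u, hu⟩ : ∃ u, u = c 3 * δ - c 4 * γ := ⟨_, rfl⟩
  obtain ⟨v, hv⟩ : ∃ v, v = c 4 * α - c 3 * β := ⟨_, rfl⟩
  have huv : u * v ≠ 0 := by
    intro h
    apply hR
    rw [h0, h1, h2]
    rw [hu, hv] at h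
    linear_combination -h
  obtain ⟨hu0, hv0⟩ := mul_ne_zero_iff.mp huv
  obtain ⟨m, hm⟩ := IsAlgClosed.exists_pow_nat_eq (w * u * v) (n := 2) (by norm_num)
  have hm0 : m ≠ 0 := by
    rintro rfl
    simp [hw0, hu0, hv0] at hm
  let A : Matrix.SpecialLinearGroup (Fin 2) L :=
    ⟨!![u * α / m, u * β / m; v * γ / m, v * δ / m], by
      rw [Matrix.det_fin_two_of]
      field_simp
      rw [hm, hw]
      ring⟩
  refine ⟨(A, Units.mk0 (c 5)⁻¹ (inv_ne_zero h5), Units.mk0 w⁻¹ (inv_ne_zero hw0),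
    Units.mk0 (w / m) (div_ne_zero hw0 hm0)), c 6 * c 5 ^ 2 * w ^ 3 * (m / w) ^ 2, ?_⟩
  ext i
  fin_cases i
  · simp [coordAct8, normalForm8, A, h0]
    field_simp
    rw [hm]
    ring
  · simp [coordAct8, normalForm8, A, h1]
    field_simp
    rw [hm]
  · simp [coordAct8, normalForm8, A, h2]
    field_simp
    rw [hm]
    ring
  · simp [coordAct8, normalForm8, A]
    field_simp
    rw [hu, hv, hw]
    ring
  · simp [coordAct8, normalForm8, A]
    field_simp
    rw [hu, hv, hw]
    ring
  · simp [coordAct8, normalForm8]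
  · simp [coordAct8, normalForm8]
    field_simp

theorem orbit8_eq_of_invariant8_ne_zero [IsAlgClosed L] {c : Fin 7 → L}
    (hc : invariant8 c ≠ 0) : orbit8 c = {x | invariant8 x = invariant8 c} := by
  ext x
  constructor
  · rintro ⟨g, rfl⟩
    exact invariant8_coordAct8 g c
  · intro hx
    simp only [Set.mem_ofPred_eq] at hx
    obtain ⟨g, hg⟩ := exists_coordAct8_normalForm8 hc
    obtain ⟨h, hh⟩ := exists_coordAct8_normalForm8 (c := x) (hx ▸ hc)
    have hmem : x ∈ orbit8 (normalForm8 (-invariant8 c)) := ⟨h, hx ▸ hh⟩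
    rwa [← orbit8_coordAct8 g, hg] at hmem

theorem isZariskiClosed_invariant8_fiber (y : L) :
    IsZariskiClosed {x : Fin 7 → L | invariant8 x = y} := by
  refine ⟨{MvPolynomial.X 5 ^ 2 * MvPolynomial.X 6
      * (MvPolynomial.X 1 ^ 2 - 4 * MvPolynomial.X 0 * MvPolynomial.X 2)
      * (MvPolynomial.X 2 * MvPolynomial.X 3 ^ 2
        - MvPolynomial.X 1 * MvPolynomial.X 3 * MvPolynomial.X 4
        + MvPolynomial.X 0 * MvPolynomial.X 4 ^ 2) - MvPolynomial.C y}, ?_⟩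
  ext x
  simp [invariant8, sub_eq_zero]

theorem finite_stabilizer_normalForm8 (y : L) :
    {g | coordAct8 g (normalForm8 y) = normalForm8 y}.Finite := by
  let φ : Matrix.SpecialLinearGroup (Fin 2) L × Lˣ × Lˣ × Lˣ → Fin 7 → L := fun g =>
    ![g.1.1 0 0, g.1.1 0 1, g.1.1 1 0, g.1.1 1 1, g.2.1, g.2.2.1, g.2.2.2]
  have hφ : Function.Injective φ := by
    rintro ⟨A, t₁, t₂, t₃⟩ ⟨B, s₁, s₂, s₃⟩ h
    simp only [φ, Matrix.vecCons_inj, Units.val_inj] at h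
    obtain ⟨h1, h2, h3, h4, h5, h6, h7, -⟩ := h
    simp only [Prod.mk.injEq]
    refine ⟨?_, h5, h6, h7⟩
    ext i j
    fin_cases i <;> fin_cases j <;> assumption
  have hroots : {x : L | x ^ 5 = x}.Finite := by
    have hne : (Polynomial.X ^ 5 - Polynomial.X : Polynomial L) ≠ 0 :=
      (Polynomial.monic_X_pow_sub (n := 5) (by simp)).ne_zero
    refine (Polynomial.finite_setOfPred_isRoot hne).subset ?_
    intro x hx
    simpa [sub_eq_zero] using hx
  refine ((Set.Finite.pi' fun _ : Fin 7 => hroots).preimage hφ.injOn).subset ?_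
  rintro ⟨A, t₁, t₂, t₃⟩ h
  have hA : A.1 0 0 * A.1 1 1 - A.1 0 1 * A.1 1 0 = 1 := by
    rw [← Matrix.det_fin_two, A.2]
  have e0 : A.1 0 0 * A.1 1 0 = 0 := by simpa [coordAct8, normalForm8] using congrFun h 0
  have e1 := congrFun h 1
  have e2 : A.1 0 1 * A.1 1 1 = 0 := by simpa [coordAct8, normalForm8] using congrFun h 2
  have e3 := congrFun h 3
  have e4 := congrFun h 4
  have e5 : (t₁ : L) = 1 := by simpa [coordAct8, normalForm8] using congrFun h 5
  simp [coordAct8, normalForm8, inv_mul_eq_iff_eq_mul₀] at e1 e3 e4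
  simp only [Set.mem_preimage, Set.mem_ofPred_eq, φ, Fin.forall_fin_succ]
  generalize A.1 0 0 = p at *
  generalize A.1 0 1 = q at *
  generalize A.1 1 0 = r at *
  generalize A.1 1 1 = t at *
  rw [← e1, ← e3, e5]
  rcases mul_eq_zero.mp e0 with rfl | rfl
  · have hr : r ≠ 0 := by
      rintro rfl
      simp at hA
    have hq : q ≠ 0 := by
      rintro rfl
      simp at hA
    obtain rfl : t = 0 := by simpa [hq] using e2
    obtain rfl : q = r := by linear_combination e4 - e3
    have : q ^ 2 = -1 := by linear_combination -hA
    have h5 : q ^ 5 = q := by linear_combination (q ^ 3 - q) * this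
    have h10 : (q * q) ^ 5 = q * q := by rw [mul_pow, h5]
    simp [h5, h10]
  · have hp : p ≠ 0 := by
      rintro rfl
      simp at hA
    have ht : t ≠ 0 := by
      rintro rfl
      simp at hA
    obtain rfl : q = 0 := by simpa [ht] using e2
    obtain rfl : p = t := by linear_combination e3 - e4
    have : p ^ 2 = 1 := by linear_combination hA
    have h5 : p ^ 5 = p := by linear_combination (p ^ 3 + p) * this
    have h10 : (p * p) ^ 5 = p * p := by rw [mul_pow, h5]
    simp [h5, h10]

theorem finite_stabilizer_coordAct8 {c : Fin 7 → L}
    (hc : {g | coordAct8 g c = c}.Finite)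
    (g : Matrix.SpecialLinearGroup (Fin 2) L × Lˣ × Lˣ × Lˣ) :
    {h | coordAct8 h (coordAct8 g c) = coordAct8 g c}.Finite := by
  refine (hc.preimage (MulAut.conj g).injective.injOn).subset ?_
  intro h hh
  simp only [Set.mem_ofPred_eq] at hh
  simp only [Set.mem_preimage, Set.mem_ofPred_eq, MulAut.conj_apply, coordAct8_mul, hh,
    coordAct8_inv_coordAct8]

end Invariant

theorem stable8_iff_Delta8_ne_zero
    {L : Type*} [Field L] [IsAlgClosed L] (c : Fin 7 → L) :
    Stable8 c ↔ Delta8 c ≠ 0 := by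
  have : Infinite L := IsAlgClosed.instInfinite
  constructor
  · intro hc
    exact pow_ne_zero 2 (mul_ne_zero (mul_ne_zero (mul_ne_zero
      (pow_ne_zero 2 (apply_five_ne_zero_of_stable8 hc)) (apply_six_ne_zero_of_stable8 hc))
      (discrim_ne_zero_of_stable8 hc)) (resultant_ne_zero_of_stable8 hc))
  · intro hc
    have hI : invariant8 c ≠ 0 := fun h => hc (by
      rw [Delta8]
      exact (sq_eq_zero_iff).mpr h)
    rw [stable8_iff]
    constructor
    · rw [orbit8_eq_of_invariant8_ne_zero hI]
      exact isZariskiClosed_invariant8_fiber _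
    · obtain ⟨g, hg⟩ := exists_coordAct8_normalForm8 hI
      have := finite_stabilizer_coordAct8
        (finite_stabilizer_normalForm8 (-invariant8 c)) g
      rwa [hg] at this
end
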